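/- arXiv:2207.09797 — 2 statements merged into one kernel-verified Lean document; each statement's English description precedes it below -/
import Mathlib

section
/- Let G be a graph with independence number α = α(G), let t ≥ 1 be an integer, let M be a perfect matching of G, let C be an M-alternating cycle, and let P ⊆ C be an M-alternating path with w_M(P) ≥ 2t·4^α. Then P contains at least t pairwise disjoint negative skips. Symmetrically, if w_M(P) ≤ −2t·4^α, then P contains at least t pairwise disjoint positive skips. -/
open Finset

/-- `M` is (the edge set of) a perfect matching of `G`: all its edges are edges of `G` and
every vertex belongs to exactly one edge of `M`. -/
def IsPM {V : Type*} [DecidableEq V] (G : SimpleGraph V) (M : Finset (Sym2 V)) : Prop :=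
  ↑M ⊆ G.edgeSet ∧ ∀ v : V, ∃! e, e ∈ M ∧ v ∈ e

/-- Number of red edges in the edge set `F` (the coloring `red` marks the red edges). -/
def redCount {V : Type*} [DecidableEq V] (red : Sym2 V → Bool) (F : Finset (Sym2 V)) : ℕ :=
  (F.filter fun e => red e = true).card

/-- Number of blue edges in the edge set `F`. -/
def blueCount {V : Type*} [DecidableEq V] (red : Sym2 V → Bool) (F : Finset (Sym2 V)) : ℕ :=
  (F.filter fun e => red e = false).card

/-- The weight `w_M(e)`: 0 for blue edges, +1 for red non-matching edges, −1 for red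
matching edges. -/
def wt {V : Type*} [DecidableEq V] (red : Sym2 V → Bool) (M : Finset (Sym2 V))
    (e : Sym2 V) : ℤ :=
  if red e then (if e ∈ M then -1 else 1) else 0

/-- `w_M(F)`, the total weight of an edge set `F`. -/
def wSum {V : Type*} [DecidableEq V] (red : Sym2 V → Bool) (M F : Finset (Sym2 V)) : ℤ :=
  ∑ e ∈ F, wt red M e

/-- A list of edges alternates with respect to the matching `M`: consecutive edges are
alternately in and out of `M`. -/
def altList {V : Type*} [DecidableEq V] (M : Finset (Sym2 V)) (l : List (Sym2 V)) : Prop :=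
  l.Chain' fun e f => ¬((e ∈ M) ↔ (f ∈ M))

/-- `C` is (the edge set of) an `M`-alternating cycle in `G`: it is traced by a cycle walk
whose edges alternate (cyclically) between `M` and non-`M` edges. -/
def IsAltCycle {V : Type*} [DecidableEq V] (G : SimpleGraph V)
    (M C : Finset (Sym2 V)) : Prop :=
  ∃ (v : V) (p : G.Walk v v), p.IsCycle ∧ p.edges.toFinset = C ∧
    altList M (p.edges ++ p.edges.take 1)

/-- `P` is (the edge set of) an `M`-alternating path in `G`. -/
def IsAltPath {V : Type*} [DecidableEq V] (G : SimpleGraph V)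
    (M P : Finset (Sym2 V)) : Prop :=
  ∃ (u v : V) (p : G.Walk u v), p.IsPath ∧ p.edges.toFinset = P ∧ altList M p.edges

/-- The symmetric difference of two edge sets. -/
def sd {V : Type*} [DecidableEq V] (M M' : Finset (Sym2 V)) : Finset (Sym2 V) :=
  (M \ M') ∪ (M' \ M)

/-- The set of vertices covered by an edge set. -/
def edgeVerts {V : Type*} (F : Finset (Sym2 V)) : Set V := {v | ∃ e ∈ F, v ∈ e}

/-- `𝒞` is a set of pairwise vertex-disjoint `M`-alternating cycles of `G`. -/
def IsAltCycleSet {V : Type*} [DecidableEq V] (G : SimpleGraph V) (M : Finset (Sym2 V))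
    (𝒞 : Finset (Finset (Sym2 V))) : Prop :=
  (∀ C ∈ 𝒞, IsAltCycle G M C) ∧
    (𝒞 : Set (Finset (Sym2 V))).Pairwise fun C C' => Disjoint (edgeVerts C) (edgeVerts C')

/-- A skip on the `M`-alternating cycle `C` (with respect to the coloring `red`):
two non-matching chords `e1 ≠ e2` of `C`, not edges of `C`, such that replacing two
stretches of `C` by them yields a strictly shorter `M`-alternating cycle `C'` whose weight
differs from that of `C` by at most 4 in absolute value. -/
structure Skip {V : Type*} [DecidableEq V] (G : SimpleGraph V) (red : Sym2 V → Bool)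
    (M C : Finset (Sym2 V)) where
  e1 : Sym2 V
  e2 : Sym2 V
  C' : Finset (Sym2 V)
  hne : e1 ≠ e2
  he1G : e1 ∈ G.edgeSet
  he2G : e2 ∈ G.edgeSet
  he1M : e1 ∉ M
  he2M : e2 ∉ M
  he1C : e1 ∉ C
  he2C : e2 ∉ C
  halt : IsAltCycle G M C'
  hmem1 : e1 ∈ C'
  hmem2 : e2 ∈ C'
  hsub : C' \ {e1, e2} ⊆ C
  hsmall : C'.card < C.card
  hwbound : |wSum red M C' - wSum red M C| ≤ 4

/-- The weight `w(S) = w_M(C') − w_M(C)` of a skip. -/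
def Skip.w {V : Type*} [DecidableEq V] {G : SimpleGraph V} {red : Sym2 V → Bool}
    {M C : Finset (Sym2 V)} (S : Skip G red M C) : ℤ :=
  wSum red M S.C' - wSum red M C

/-- The skip `S` is contained in the path `P` along `C`: the stretch of `C` removed by
the skip lies on `P`. -/
def Skip.In {V : Type*} [DecidableEq V] {G : SimpleGraph V} {red : Sym2 V → Bool}
    {M C : Finset (Sym2 V)} (S : Skip G red M C) (P : Finset (Sym2 V)) : Prop :=
  C \ S.C' ⊆ P

/-- Two skips on `C` are disjoint: they are contained in disjoint paths along `C`. -/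
def Skip.Disj {V : Type*} [DecidableEq V] {G : SimpleGraph V} {red : Sym2 V → Bool}
    {M C : Finset (Sym2 V)} (S1 S2 : Skip G red M C) : Prop :=
  ∃ P1 P2 : Finset (Sym2 V), P1 ⊆ C ∧ P2 ⊆ C ∧ Disjoint P1 P2 ∧
    IsAltPath G M P1 ∧ IsAltPath G M P2 ∧ S1.In P1 ∧ S2.In P2

/-- A skip living on one of the cycles of the family `𝒞`. -/
structure SkipOn {V : Type*} [DecidableEq V] (G : SimpleGraph V) (red : Sym2 V → Bool)
    (M : Finset (Sym2 V)) (𝒞 : Finset (Finset (Sym2 V))) where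
  C : Finset (Sym2 V)
  hC : C ∈ 𝒞
  S : Skip G red M C

/-- Two skips on cycles of `𝒞` are disjoint: either they live on different
(vertex-disjoint) cycles, or they are disjoint skips on the same cycle. -/
def SkipOn.Disj {V : Type*} [DecidableEq V] {G : SimpleGraph V} {red : Sym2 V → Bool}
    {M : Finset (Sym2 V)} {𝒞 : Finset (Finset (Sym2 V))}
    (T1 T2 : SkipOn G red M 𝒞) : Prop :=
  T1.C ≠ T2.C ∨ ∃ h : T1.C = T2.C, Skip.Disj (h ▸ T1.S) T2.S

/-- `𝒞` contains a 0-skip set: a nonempty collection of pairwise disjoint skips on cycles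
of `𝒞` of total weight 0. -/
def HasZeroSkipSet {V : Type*} [DecidableEq V] (G : SimpleGraph V) (red : Sym2 V → Bool)
    (M : Finset (Sym2 V)) (𝒞 : Finset (Finset (Sym2 V))) : Prop :=
  ∃ L : List (SkipOn G red M 𝒞), L ≠ [] ∧ L.Pairwise SkipOn.Disj ∧
    (L.map fun T => T.S.w).sum = 0

/-- `𝒞` contains a 0-skip-cycle set: a nonempty collection of pairwise disjoint skips on
cycles of `𝒞` and/or whole cycles `D ⊆ 𝒞` (the skips living on cycles not in `D`), such
that the total weight of the skips minus the total weight of the cycles is 0. -/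
def HasZeroSkipCycleSet {V : Type*} [DecidableEq V] (G : SimpleGraph V)
    (red : Sym2 V → Bool) (M : Finset (Sym2 V)) (𝒞 : Finset (Finset (Sym2 V))) : Prop :=
  ∃ (L : List (SkipOn G red M 𝒞)) (D : Finset (Finset (Sym2 V))),
    D ⊆ 𝒞 ∧ (L ≠ [] ∨ D.Nonempty) ∧ L.Pairwise SkipOn.Disj ∧ (∀ T ∈ L, T.C ∉ D) ∧
      (L.map fun T => T.S.w).sum - (∑ C ∈ D, wSum red M C) = 0

/-- The independence number `α(G)`: the maximum size of a set of pairwise non-adjacent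
vertices. -/
noncomputable def indepNum {V : Type*} (G : SimpleGraph V) : ℕ :=
  sSup {n | ∃ s : Finset V, s.card = n ∧ (s : Set V).Pairwise fun u v => ¬ G.Adj u v}

/-- `RamseyProp N s t`: every graph on `N` vertices contains a clique of size `s` or an
independent set of size `t`. -/
def RamseyProp (N s t : ℕ) : Prop :=
  ∀ H : SimpleGraph (Fin N),
    (∃ A : Finset (Fin N), A.card = s ∧ (A : Set (Fin N)).Pairwise H.Adj) ∨
    (∃ B : Finset (Fin N), B.card = t ∧ (B : Set (Fin N)).Pairwise fun u v => ¬ H.Adj u v)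

/-- The Ramsey number `R(s,t)`: the smallest `N` such that every graph on `N` vertices
contains a clique of size `s` or an independent set of size `t`. -/
noncomputable def ramsey (s t : ℕ) : ℕ := sInf {N | RamseyProp N s t}

/-!
Number the vertices of `C` periodically as `c 0, c 1, …` so that the matching edges leave the
vertices of even index; the weight of a stretch of `C` is then a difference of a potential `F` on
`ℕ` whose steps are `0` or `1` at odd indices and `0` or `-1` at even ones. Write `B` for the
binomial coefficient of `2α` over `α`, which is less than `4 ^ α`. If `F` rises by `2tB` along `P`,
then the first crossings of successive levels, each a non-matching edge of weight `1`, pair up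
into `tB` disjoint stretches of weight `2` that begin and end with a non-matching edge. If `F` falls
by more than `2tB`, the same crossings for `-F` are matching edges, and the gaps between them give
`tB` disjoint stretches of weight `-1` of the same shape.

Among `B` such stretches two, `[i, j]` and `[k, l]`, have adjacent left ends and adjacent right
ends. Otherwise any two stretches have nonadjacent left ends or nonadjacent right ends, and the
Erdős–Szekeres form of Ramsey's theorem yields `α + 1` pairwise nonadjacent vertices. By parity
neither `c i c k` nor `c j c l` is an edge of `C` or `M`, and replacing the two stretches by these
chords gives an alternating cycle, which is shorter because a stretch of weight `2` or `-1` has more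
than one, hence at least three, edges. As the chords have weights in `[0, 1]`, this is a skip of
weight at most `-4 + 2 < 0` in the first case and at least `2 > 0` in the second.
-/

/-! ### Two adjacencies among few pairs of vertices -/

theorem exists_isNClique_or_isNClique_compl {ι : Type*} (H : SimpleGraph ι) (x y : ℕ)
    (S : Finset ι) (hS : (x + y).choose x ≤ S.card) :
    (∃ T ⊆ S, H.IsNClique (x + 1) T) ∨ ∃ T ⊆ S, Hᶜ.IsNClique (y + 1) T := by
  classical
  induction x generalizing y S with
  | zero =>
    obtain ⟨v, hv⟩ : S.Nonempty := card_pos.1 (by simpa using hS)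
    exact .inl ⟨{v}, by simpa using hv, by simp⟩
  | succ x ihx =>
    induction y generalizing S with
    | zero =>
      obtain ⟨v, hv⟩ : S.Nonempty := card_pos.1 (by simpa using hS)
      exact .inr ⟨{v}, by simpa using hv, by simp⟩
    | succ y ihy =>
      have pascal : (x + 1 + (y + 1)).choose (x + 1) =
          (x + (y + 1)).choose x + (x + 1 + y).choose (x + 1) := by
        rw [show x + 1 + (y + 1) = x + (y + 1) + 1 by ring, Nat.choose_succ_succ,
          show x + (y + 1) = x + 1 + y by ring]
      obtain ⟨v, hv⟩ : S.Nonempty :=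
        card_pos.1 ((Nat.choose_pos (by omega)).trans_le hS)
      have extend {K : SimpleGraph ι} [DecidableRel K.Adj] {n : ℕ} {T : Finset ι}
          (hT : T ⊆ (S.erase v).filter (K.Adj v)) (hK : K.IsNClique n T) :
          insert v T ⊆ S ∧ K.IsNClique (n + 1) (insert v T) :=
        ⟨insert_subset hv (hT.trans ((filter_subset _ _).trans (erase_subset _ _))),
          hK.insert fun w hw => (mem_filter.1 (hT hw)).2⟩
      have split : ((S.erase v).filter (H.Adj v)).card +
          ((S.erase v).filter (Hᶜ.Adj v)).card + 1 = S.card := by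
        have compl : (S.erase v).filter (Hᶜ.Adj v) = (S.erase v).filter (¬ H.Adj v ·) :=
          filter_congr fun w hw => by simp [SimpleGraph.compl_adj, (ne_of_mem_erase hw).symm]
        rw [compl, card_filter_add_card_filter_not, card_erase_add_one hv]
      rcases le_or_gt ((x + (y + 1)).choose x) ((S.erase v).filter (H.Adj v)).card with h | h
      · rcases ihx (y + 1) _ h with ⟨T, hT, hK⟩ | ⟨T, hT, hK⟩
        · exact .inl ⟨_, extend hT hK⟩
        · exact .inr ⟨T, hT.trans ((filter_subset _ _).trans (erase_subset _ _)), hK⟩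
      · rcases ihy ((S.erase v).filter (Hᶜ.Adj v)) (by omega) with ⟨T, hT, hK⟩ | ⟨T, hT, hK⟩
        · exact .inl ⟨T, hT.trans ((filter_subset _ _).trans (erase_subset _ _)), hK⟩
        · exact .inr ⟨_, extend hT hK⟩

theorem exists_common_adj {V : Type*} {G : SimpleGraph V} {α : ℕ}
    (hα : G.IndepSetFree (α + 1)) {a b : Fin α.centralBinom → V}
    (ha : Function.Injective a) (hb : Function.Injective b) :
    ∃ i j, i < j ∧ G.Adj (a i) (a j) ∧ G.Adj (b i) (b j) := by
  by_contra! h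
  have nonadj {i j : Fin α.centralBinom} (hij : G.Adj (a i) (a j)) : ¬ G.Adj (b i) (b j) := by
    rcases lt_trichotomy i j with hlt | rfl | hlt
    · exact h i j hlt hij
    · exact G.irrefl
    · exact fun hb => h j i hlt hij.symm hb.symm
  have indep {f : Fin α.centralBinom → V} (hf : Function.Injective f) {T : Finset (Fin _)}
      (hT : (G.comap f)ᶜ.IsNClique (α + 1) T) : False := by
    refine hα (T.map ⟨f, hf⟩) ⟨?_, by simpa using hT.card_eq⟩
    rw [SimpleGraph.isNClique_compl] at hT
    simpa [SimpleGraph.IsIndepSet, Set.Pairwise, hf.eq_iff] using hT.isIndepSet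
  obtain ⟨T, -, hT⟩ | ⟨T, -, hT⟩ := exists_isNClique_or_isNClique_compl (G.comap a) α α univ
    (by rw [card_fin, Nat.centralBinom_eq_two_mul_choose, two_mul])
  · exact indep hb (hT.mono fun i j hij => ⟨fun hh => (G.comap a).ne_of_adj hij hh,
      nonadj hij⟩)
  · exact indep ha hT

/-! ### Upcrossings of an integer sequence -/

theorem exists_first_upcrossing {f : ℕ → ℤ} (hf : ∀ k, f (k + 1) ≤ f k + 1) {p r h : ℕ}
    (hpr : p ≤ r) (hr : f p + h < f r) :
    ∃ k, p ≤ k ∧ k < r ∧ f k = f p + h ∧ f (k + 1) = f p + h + 1 ∧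
      ∀ m, p ≤ m → m ≤ k → f m ≤ f p + h := by
  classical
  have hex : ∃ d, f p + h < f (p + d) := ⟨r - p, by rwa [Nat.add_sub_cancel' hpr]⟩
  obtain ⟨d, hd⟩ : ∃ d, Nat.find hex = d + 1 :=
    Nat.exists_eq_succ_of_ne_zero fun h0 => by have := h0 ▸ Nat.find_spec hex; simp at this; omega
  have hlow (m : ℕ) (hpm : p ≤ m) (hm : m ≤ p + d) : f m ≤ f p + h := by
    have := Nat.find_min hex (m := m - p) (by omega)
    rwa [Nat.add_sub_cancel' hpm, not_lt] at this
  have hhigh : f p + h < f (p + d + 1) := by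
    simpa only [hd, add_assoc] using Nat.find_spec hex
  have := hlow (p + d) (by omega) le_rfl
  have := hf (p + d)
  refine ⟨p + d, by omega, ?_, by omega, by omega, hlow⟩
  by_contra! hle
  exact (hlow r hpr hle).not_gt hr

theorem exists_upcrossings {f : ℕ → ℤ} (hf : ∀ k, f (k + 1) ≤ f k + 1) {p r n : ℕ}
    (hpr : p ≤ r) (hr : f p + n ≤ f r) :
    ∃ τ : ℕ → ℕ, (∀ h < n, p ≤ τ h ∧ τ h < r ∧ f (τ h) = f p + h ∧
      f (τ h + 1) = f p + h + 1) ∧ StrictMonoOn τ (Set.Iio n) := by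
  choose! τ hpτ hτr hτ hτ' hlow using fun h (hh : h < n) =>
    exists_first_upcrossing (h := h) hf hpr (by omega)
  refine ⟨τ, fun h hh => ⟨hpτ h hh, hτr h hh, hτ h hh, hτ' h hh⟩, fun h hh h' hh' hlt => ?_⟩
  by_contra! hle
  have := hlow h hh (τ h') (hpτ h' hh') hle
  have := hτ h' hh'
  omega

/-- `N` successive index intervals `[x m, y m]`, separated and contained in `[p, r]`, each from
an odd to an even index and each raising `F` by `d`. When `F` is the potential of an alternating
cycle whose edges of even index are the matching edges, these are stretches of weight `d` that
begin and end with a non-matching edge. -/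
structure IsOddEvenSegments (F : ℕ → ℤ) (p r : ℕ) (d : ℤ) {N : ℕ} (x y : Fin N → ℕ) : Prop where
  odd_left : ∀ m, Odd (x m)
  even_right : ∀ m, Even (y m)
  le_left : ∀ m, p ≤ x m
  left_lt_right : ∀ m, x m < y m
  right_le : ∀ m, y m ≤ r
  gain : ∀ m, F (y m) - F (x m) = d
  right_lt_left : ∀ ⦃m m'⦄, m < m' → y m < x m'

section Segments

variable {F : ℕ → ℤ} (hodd : ∀ k, Odd k → F (k + 1) - F k ∈ Set.Icc 0 1)
  (heven : ∀ k, Even k → F (k + 1) - F k ∈ Set.Icc (-1) 0) {p r : ℕ} (hpr : p ≤ r)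
include hodd heven hpr

theorem exists_isOddEvenSegments_two {N : ℕ} (hN : F p + 2 * N ≤ F r) :
    ∃ x y : Fin N → ℕ, IsOddEvenSegments F p r 2 x y := by
  have hstep (k : ℕ) : F (k + 1) ≤ F k + 1 := by
    rcases k.even_or_odd with hk | hk
    · linarith [(heven k hk).2]
    · linarith [(hodd k hk).2]
  obtain ⟨τ, hτ, hmono⟩ := exists_upcrossings hstep hpr (n := 2 * N) (by push_cast; exact hN)
  have odd_τ {h : ℕ} (hh : h < 2 * N) : Odd (τ h) := by
    by_contra heo
    have := (heven _ (Nat.not_odd_iff_even.1 heo)).2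
    have := hτ h hh
    omega
  refine ⟨fun m => τ (2 * m), fun m => τ (2 * m + 1) + 1, fun m => odd_τ (by omega),
    fun m => (odd_τ (by omega)).add_one, fun m => (hτ _ (by omega)).1, fun m => ?_,
    fun m => (hτ _ (by omega)).2.1, fun m => ?_, fun m m' hlt => ?_⟩
  · have := hmono (a := 2 * m) (b := 2 * m + 1) (Set.mem_Iio.2 (by omega))
      (Set.mem_Iio.2 (by omega)) (by omega)
    omega
  · have := hτ (2 * m) (by omega)
    have := hτ (2 * m + 1) (by omega)
    push_cast at this
    omega
  · have : (m : ℕ) < m' := hlt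
    have := hmono (a := 2 * m + 1) (b := 2 * m') (Set.mem_Iio.2 (by omega))
      (Set.mem_Iio.2 (by omega)) (by omega)
    obtain ⟨u, hu⟩ := odd_τ (h := 2 * m + 1) (by omega)
    obtain ⟨v, hv⟩ := odd_τ (h := 2 * m') (by omega)
    omega

theorem exists_isOddEvenSegments_neg_one {N : ℕ} (hN : F r + 2 * N + 1 ≤ F p) :
    ∃ x y : Fin N → ℕ, IsOddEvenSegments F p r (-1) x y := by
  have hstep (k : ℕ) : -F (k + 1) ≤ -F k + 1 := by
    rcases k.even_or_odd with hk | hk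
    · linarith [(heven k hk).1]
    · linarith [(hodd k hk).1]
  obtain ⟨τ, hτ, hmono⟩ :=
    exists_upcrossings (f := fun k => -F k) hstep hpr (n := 2 * N + 1) (by push_cast; omega)
  have even_τ {h : ℕ} (hh : h < 2 * N + 1) : Even (τ h) := by
    by_contra hod
    have := (hodd _ (Nat.not_even_iff_odd.1 hod)).1
    have := hτ h hh
    omega
  refine ⟨fun m => τ (2 * m) + 1, fun m => τ (2 * m + 2), fun m => (even_τ (by omega)).add_one,
    fun m => even_τ (by omega), fun m => Nat.le_succ_of_le (hτ _ (by omega)).1, fun m => ?_,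
    fun m => (hτ _ (by omega)).2.1.le, fun m => ?_, fun m m' hlt => ?_⟩
  · have := hmono (a := 2 * m) (b := 2 * m + 2) (Set.mem_Iio.2 (by omega))
      (Set.mem_Iio.2 (by omega)) (by omega)
    obtain ⟨u, hu⟩ := even_τ (h := 2 * m) (by omega)
    obtain ⟨v, hv⟩ := even_τ (h := 2 * m + 2) (by omega)
    omega
  · have := hτ (2 * m) (by omega)
    have := hτ (2 * m + 2) (by omega)
    push_cast at this
    omega
  · exact Nat.lt_succ_of_le (hmono.monotoneOn (Set.mem_Iio.2 (by omega))
      (Set.mem_Iio.2 (by omega)) (by omega))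

end Segments

/-! ### Periodic parametrization of an alternating cycle -/

/-- A matching, as a set of pairwise disjoint edges; unlike `IsPM` it need not cover all
vertices. -/
def IsMatchingSet {V : Type*} (M : Finset (Sym2 V)) : Prop :=
  ∀ ⦃e f : Sym2 V⦄ ⦃v : V⦄, e ∈ M → f ∈ M → v ∈ e → v ∈ f → e = f

/-- The `k`-th edge of the trail visiting `c 0, c 1, c 2, …`. -/
def edgeAt {V : Type*} (c : ℕ → V) (k : ℕ) : Sym2 V := s(c k, c (k + 1))

/-- The edges of the stretch of the trail `c` from index `a` to index `b`. -/
def arc {V : Type*} [DecidableEq V] (c : ℕ → V) (a b : ℕ) : Finset (Sym2 V) :=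
  (Ico a b).image (edgeAt c)

/-- The weight accumulated along the trail `c` by its first `k` edges. -/
def potential {V : Type*} [DecidableEq V] (red : Sym2 V → Bool) (M : Finset (Sym2 V))
    (c : ℕ → V) (k : ℕ) : ℤ :=
  ∑ z ∈ range k, wt red M (edgeAt c z)

/-- `c : ℕ → V` runs around the `M`-alternating cycle `C` of length `L` forever; the matching
edges are those leaving a vertex of even index. -/
structure IsAltParam {V : Type*} (G : SimpleGraph V) (M C : Finset (Sym2 V)) (L : ℕ)
    (c : ℕ → V) : Prop where
  three_le : 3 ≤ L
  eq_iff : ∀ {i j}, c i = c j ↔ i ≡ j [MOD L]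
  adj : ∀ k, G.Adj (c k) (c (k + 1))
  edgeAt_mem_iff : ∀ {k}, edgeAt c k ∈ M ↔ Even k
  mem_iff : ∀ {e}, e ∈ C ↔ ∃ k, edgeAt c k = e

section Weights

variable {V : Type*} [DecidableEq V] {M : Finset (Sym2 V)} (red : Sym2 V → Bool) {e : Sym2 V}

theorem wt_mem_Icc_of_mem (he : e ∈ M) : wt red M e ∈ Set.Icc (-1) 0 := by
  by_cases hr : red e <;> simp [wt, he, hr]

theorem wt_mem_Icc_of_notMem (he : e ∉ M) : wt red M e ∈ Set.Icc 0 1 := by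
  by_cases hr : red e <;> simp [wt, he, hr]

theorem potential_succ_sub (c : ℕ → V) (k : ℕ) :
    potential red M c (k + 1) - potential red M c k = wt red M (edgeAt c k) := by
  simp [potential, sum_range_succ]

end Weights

theorem mem_arc {V : Type*} [DecidableEq V] {c : ℕ → V} {a b : ℕ} {e : Sym2 V} :
    e ∈ arc c a b ↔ ∃ k, a ≤ k ∧ k < b ∧ edgeAt c k = e := by
  simp [arc, and_assoc]

theorem IsPM.isMatchingSet {V : Type*} [DecidableEq V] {G : SimpleGraph V}
    {M : Finset (Sym2 V)} (hM : IsPM G M) : IsMatchingSet M :=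
  fun _ _ v he hf hve hvf => (hM.2 v).unique ⟨he, hve⟩ ⟨hf, hvf⟩

namespace IsAltParam

variable {V : Type*} {G : SimpleGraph V} {M C : Finset (Sym2 V)} {L : ℕ} {c : ℕ → V}
  {i j : ℕ} (hc : IsAltParam G M C L c)
include hc

theorem apply_add_length (k : ℕ) : c (k + L) = c k := hc.eq_iff.2 (by simp)

theorem exists_apply_eq (a k : ℕ) : ∃ m, a ≤ m ∧ m < a + L ∧ c m = c k := by
  have := hc.three_le
  have hmem : k % L ∈ (Ico a (a + L)).image (· % L) := by
    rw [Nat.image_Ico_mod, mem_range]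
    exact Nat.mod_lt _ (by omega)
  obtain ⟨m, hm, hmod⟩ := mem_image.1 hmem
  exact ⟨m, (mem_Ico.1 hm).1, (mem_Ico.1 hm).2, hc.eq_iff.2 hmod⟩

theorem apply_succ_eq_iff : c (i + 1) = c (j + 1) ↔ c i = c j := by
  rw [hc.eq_iff, hc.eq_iff, Nat.ModEq.add_iff_right rfl]

theorem eq_of_apply_eq (h : c i = c j) (hij : i < j + L) (hji : j < i + L) : i = j :=
  (hc.eq_iff.1 h).eq_of_abs_lt (by rw [abs_lt]; omega)

theorem edgeAt_eq_iff : edgeAt c i = edgeAt c j ↔ c i = c j := by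
  refine ⟨fun h => ?_, fun h => by rw [edgeAt, edgeAt, h, hc.apply_succ_eq_iff.2 h]⟩
  obtain ⟨h, -⟩ | ⟨h, h'⟩ := Sym2.eq_iff.1 h
  · exact h
  · have := hc.three_le
    have := hc.eq_of_apply_eq (i := j + 2) (j := j)
      ((hc.apply_succ_eq_iff.2 h).symm.trans h') (by omega) (by omega)
    omega

theorem even_iff_of_apply_eq (h : c i = c j) : Even i ↔ Even j := by
  rw [← hc.edgeAt_mem_iff, hc.edgeAt_eq_iff.2 h, hc.edgeAt_mem_iff]

theorem even_length : Even L :=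
  (hc.even_iff_of_apply_eq (by simpa using hc.apply_add_length 0)).2 Even.zero

theorem edgeAt_mem (k : ℕ) : edgeAt c k ∈ C := hc.mem_iff.2 ⟨k, rfl⟩

theorem injOn_edgeAt {a b : ℕ} (hb : b ≤ a + L) : Set.InjOn (edgeAt c) (Ico a b) := by
  intro i hi j hj h
  rw [coe_Ico, Set.mem_Ico] at hi hj
  exact hc.eq_of_apply_eq (hc.edgeAt_eq_iff.1 h) (by omega) (by omega)

theorem injOn {a b : ℕ} (hb : b ≤ a + L) : Set.InjOn c (Ico a b) := fun _ hi _ hj h =>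
  hc.injOn_edgeAt hb hi hj (hc.edgeAt_eq_iff.2 h)

variable [DecidableEq V]

theorem arc_subset (a b : ℕ) : arc c a b ⊆ C := by
  simp only [arc, image_subset_iff, hc.edgeAt_mem, implies_true]

theorem arc_length (a : ℕ) : arc c a (a + L) = C := by
  refine (hc.arc_subset _ _).antisymm fun e he => ?_
  obtain ⟨k, rfl⟩ := hc.mem_iff.1 he
  obtain ⟨m, ham, hm, h⟩ := hc.exists_apply_eq a k
  exact mem_arc.2 ⟨m, ham, hm, hc.edgeAt_eq_iff.2 h⟩

theorem card_arc {a b : ℕ} (hb : b ≤ a + L) : (arc c a b).card = b - a := by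
  rw [arc, card_image_of_injOn (hc.injOn_edgeAt hb), Nat.card_Ico]

omit [DecidableEq V] in
theorem card_eq : C.card = L := by
  classical
  rw [← hc.arc_length 0, hc.card_arc le_rfl, Nat.add_sub_cancel_left]

theorem wSum_arc (red : Sym2 V → Bool) {a b : ℕ} (hab : a ≤ b) (hb : b ≤ a + L) :
    wSum red M (arc c a b) = potential red M c b - potential red M c a := by
  rw [wSum, arc, sum_image (hc.injOn_edgeAt hb), sum_Ico_eq_sub _ hab, potential, potential]

theorem disjoint_arc {a b a' b' : ℕ} (hb : b ≤ a') (hb' : b' ≤ a + L) :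
    Disjoint (arc c a b) (arc c a' b') := by
  simp only [disjoint_left, mem_arc]
  rintro _ ⟨k, hak, hkb, rfl⟩ ⟨k', hak', hkb', h⟩
  have := hc.eq_of_apply_eq (hc.edgeAt_eq_iff.1 h) (by omega) (by omega)
  omega

theorem potential_step_of_odd (red : Sym2 V → Bool) {k : ℕ} (hk : Odd k) :
    potential red M c (k + 1) - potential red M c k ∈ Set.Icc 0 1 := by
  rw [potential_succ_sub]
  exact wt_mem_Icc_of_notMem red fun h => Nat.not_even_iff_odd.2 hk (hc.edgeAt_mem_iff.1 h)

theorem potential_step_of_even (red : Sym2 V → Bool) {k : ℕ} (hk : Even k) :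
    potential red M c (k + 1) - potential red M c k ∈ Set.Icc (-1) 0 := by
  rw [potential_succ_sub]
  exact wt_mem_Icc_of_mem red (hc.edgeAt_mem_iff.2 hk)

end IsAltParam

theorem succ_mod_cases {n : ℕ} (hn : 0 < n) (k : ℕ) :
    k % n + 1 < n ∧ (k + 1) % n = k % n + 1 ∨ k % n + 1 = n ∧ (k + 1) % n = 0 := by
  rw [← Nat.mod_add_mod]
  obtain h | h := (Nat.add_one_le_of_lt (Nat.mod_lt k hn)).lt_or_eq
  · exact .inl ⟨h, Nat.mod_eq_of_lt h⟩
  · exact .inr ⟨h, by rw [h, Nat.mod_self]⟩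

section Parametrization

variable {V : Type*} {G : SimpleGraph V} {v : V} (p : G.Walk v v)

/-- The closed walk `p` repeated forever. -/
def cyclicVert (k : ℕ) : V := p.getVert (k % p.length)

variable {p} (hp : 0 < p.length)
include hp

theorem cyclicVert_succ (k : ℕ) :
    cyclicVert p (k + 1) = p.getVert (k % p.length + 1) := by
  obtain ⟨-, h⟩ | ⟨hlen, h⟩ := succ_mod_cases hp k
  · rw [cyclicVert, h]
  · rw [cyclicVert, h, hlen, p.getVert_zero, p.getVert_length]

theorem edgeAt_cyclicVert (k : ℕ) :
    edgeAt (cyclicVert p) k = p.edges[k % p.length]'(by simpa using Nat.mod_lt k hp) := by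
  rw [SimpleGraph.Walk.getElem_edges, edgeAt, cyclicVert_succ hp, cyclicVert]

theorem mem_edges_iff_edgeAt_cyclicVert (s : ℕ) {e : Sym2 V} :
    e ∈ p.edges ↔ ∃ k, edgeAt (cyclicVert p) (s + k) = e := by
  rw [List.mem_iff_getElem]
  constructor
  · rintro ⟨i, hi, rfl⟩
    obtain ⟨n, hn⟩ : ∃ n, p.length = n + 1 := ⟨p.length - 1, by omega⟩
    refine ⟨s * n + i, (edgeAt_cyclicVert hp (s + (s * n + i))).trans ?_⟩
    have : (s + (s * n + i)) % p.length = i := by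
      rw [show s + (s * n + i) = s * p.length + i by rw [hn]; ring, Nat.mul_add_mod_self_right,
        Nat.mod_eq_of_lt (p.length_edges ▸ hi)]
    simp only [this]
  · rintro ⟨k, rfl⟩
    exact ⟨_, by simpa using Nat.mod_lt _ hp, (edgeAt_cyclicVert hp (s + k)).symm⟩

theorem edgeAt_cyclicVert_alternate [DecidableEq V] {M : Finset (Sym2 V)}
    (halt : altList M (p.edges ++ p.edges.take 1)) (k : ℕ) :
    edgeAt (cyclicVert p) (k + 1) ∈ M ↔ edgeAt (cyclicVert p) k ∉ M := by
  have hlt := Nat.mod_lt k hp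
  have := List.isChain_iff_getElem.1 halt (k % p.length) (by simp; omega)
  have hk : (p.edges ++ p.edges.take 1)[k % p.length]'(by simp; omega) =
      edgeAt (cyclicVert p) k := by
    rw [List.getElem_append_left (by simpa using hlt), edgeAt_cyclicVert hp]
  have hk' : (p.edges ++ p.edges.take 1)[k % p.length + 1]'(by simp; omega) =
      edgeAt (cyclicVert p) (k + 1) := by
    rw [edgeAt_cyclicVert hp]
    obtain ⟨hlen, h⟩ | ⟨hlen, h⟩ := succ_mod_cases hp k
    · simp [h, hlen]
    · simp [h, hlen]
  rw [hk, hk'] at this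
  tauto

end Parametrization

theorem IsAltCycle.exists_isAltParam {V : Type*} [DecidableEq V] {G : SimpleGraph V}
    {M C : Finset (Sym2 V)} (hC : IsAltCycle G M C) : ∃ L c, IsAltParam G M C L c := by
  obtain ⟨v, p, hp, rfl, halt⟩ := hC
  have h3 := hp.three_le_length
  have hpos : 0 < p.length := by omega
  have alternate := edgeAt_cyclicVert_alternate hpos halt
  obtain ⟨s, hs⟩ : ∃ s, edgeAt (cyclicVert p) s ∈ M := by
    by_contra! h
    exact h 1 ((alternate 0).2 (h 0))
  have eq_iff {i j : ℕ} : cyclicVert p i = cyclicVert p j ↔ i ≡ j [MOD p.length] := by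
    refine ⟨fun h => ?_, fun h => congrArg p.getVert h⟩
    have := Nat.mod_lt i hpos
    have := Nat.mod_lt j hpos
    exact hp.getVert_injOn' (by simp; omega) (by simp; omega) h
  refine ⟨p.length, fun k => cyclicVert p (s + k), h3, @fun i j => ?_, fun k => ?_, fun {k} => ?_,
    fun {e} => ?_⟩
  · rw [eq_iff, Nat.ModEq.add_iff_left rfl]
  · rw [← add_assoc, cyclicVert_succ hpos]
    exact p.adj_getVert_succ (Nat.mod_lt _ hpos)
  · change edgeAt (cyclicVert p) (s + k) ∈ M ↔ Even k
    induction k with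
    | zero => simpa using hs
    | succ k ih => rw [← add_assoc, alternate, ih, Nat.even_add_one]
  · rw [List.mem_toFinset, mem_edges_iff_edgeAt_cyclicVert hpos s]
    rfl

/-! ### Alternating paths contained in the cycle -/

namespace IsAltParam

variable {V : Type*} {G : SimpleGraph V} {M C : Finset (Sym2 V)} {L : ℕ} {c : ℕ → V}
  (hc : IsAltParam G M C L c)
include hc

theorem eq_or_eq_of_mk_mem {k : ℕ} {x : V} (h : s(c (k + 1), x) ∈ C) :
    x = c (k + 2) ∨ x = c k := by
  obtain ⟨m, hm⟩ := hc.mem_iff.1 h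
  obtain ⟨hm, hx⟩ | ⟨hx, hm⟩ := Sym2.eq_iff.1 hm
  · exact .inl (hx ▸ hc.apply_succ_eq_iff.2 hm)
  · exact .inr (hx ▸ hc.apply_succ_eq_iff.1 hm)

/-- A path of `C` never turns back. -/
theorem exists_follows {u : ℕ → V} {n : ℕ} (hinj : Set.InjOn u (Set.Iic (n + 1)))
    (hmem : ∀ i ≤ n, s(u i, u (i + 1)) ∈ C) :
    ∃ p, (∀ i ≤ n + 1, u i = c (p + i)) ∨ ∀ i j, i + j = n + 1 → u i = c (p + j) := by
  induction n with
  | zero =>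
    obtain ⟨k, hk⟩ := hc.mem_iff.1 (hmem 0 le_rfl)
    obtain ⟨h0, h1⟩ | ⟨h0, h1⟩ := Sym2.eq_iff.1 hk
    · exact ⟨k, .inl fun i hi => by interval_cases i <;> simp [*]⟩
    · refine ⟨k, .inr fun i j hij => ?_⟩
      obtain rfl | rfl : i = 0 ∨ i = 1 := by omega
      · simp [show j = 1 by omega, h1]
      · simp [show j = 0 by omega, h0]
  | succ n ih =>
    have hlast := hmem (n + 1) le_rfl
    have hturn : u (n + 2) ≠ u n := fun h => by
      have := hinj (Set.mem_Iic.2 le_rfl) (Set.mem_Iic.2 (by omega)) h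
      omega
    obtain ⟨p, h | h⟩ := ih (hinj.mono (Set.Iic_subset_Iic.2 (by omega)))
      fun i hi => hmem i (by omega)
    · rw [h (n + 1) le_rfl, ← add_assoc] at hlast
      rw [h n (by omega)] at hturn
      have hnext := (hc.eq_or_eq_of_mk_mem hlast).resolve_right hturn
      refine ⟨p, .inl fun i hi => ?_⟩
      obtain hi | rfl := Nat.le_succ_iff.1 hi
      · exact h i hi
      · exact hnext
    · have hL := hc.three_le
      have hback (j : ℕ) : c (p + j) = c (p + L - 1 + (j + 1)) := by
        rw [← hc.apply_add_length]
        congr 1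
        omega
      rw [h (n + 1) 0 rfl, hback] at hlast
      rw [h n 1 rfl, hback] at hturn
      have hnext := (hc.eq_or_eq_of_mk_mem hlast).resolve_left hturn
      refine ⟨p + L - 1, .inr fun i j hij => ?_⟩
      obtain _ | j := j
      · rwa [show i = n + 2 by omega]
      · rw [h i j (by omega), hback]

theorem length_lt {x y p} {w : G.Walk x y} (hw : w.IsPath)
    (h : ∀ i ≤ w.length, w.getVert i = c (p + i)) : w.length < L := by
  by_contra! hle
  have := hc.three_le
  have := hw.getVert_injOn (show 0 ≤ w.length by omega) hle
    (by rw [h 0 (by omega), h L hle, hc.apply_add_length, add_zero])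
  omega

end IsAltParam

theorem edges_toFinset_eq_arc {V : Type*} [DecidableEq V] {G : SimpleGraph V} {c : ℕ → V}
    {x y : V} {p : ℕ} {w : G.Walk x y} (h : ∀ i ≤ w.length, w.getVert i = c (p + i)) :
    w.edges.toFinset = arc c p (p + w.length) := by
  ext e
  rw [List.mem_toFinset, List.mem_iff_getElem, mem_arc]
  have hedge {i : ℕ} (hi : i < w.length) :
      w.edges[i]'(by simpa) = edgeAt c (p + i) := by
    rw [w.getElem_edges, h i hi.le, h (i + 1) hi, edgeAt, add_assoc]
  constructor
  · rintro ⟨i, hi, rfl⟩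
    rw [w.length_edges] at hi
    exact ⟨p + i, by omega, by omega, (hedge hi).symm⟩
  · rintro ⟨k, hpk, hk, rfl⟩
    obtain ⟨i, rfl⟩ := Nat.exists_eq_add_of_le hpk
    exact ⟨i, by rw [w.length_edges]; omega, hedge (by omega)⟩

theorem IsAltParam.exists_arc_eq {V : Type*} [DecidableEq V] {G : SimpleGraph V}
    {M C P : Finset (Sym2 V)} {L : ℕ} {c : ℕ → V} (hc : IsAltParam G M C L c)
    (hP : IsAltPath G M P) (hPC : P ⊆ C) : ∃ p r, p ≤ r ∧ r < p + L ∧ P = arc c p r := by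
  obtain ⟨x, y, w, hw, rfl, -⟩ := hP
  have arc_of_forward {x y : V} {w : G.Walk x y} (hw : w.IsPath) {p : ℕ}
      (h : ∀ i ≤ w.length, w.getVert i = c (p + i)) :
      ∃ p r, p ≤ r ∧ r < p + L ∧ w.edges.toFinset = arc c p r :=
    ⟨p, p + w.length, by omega, by have := hc.length_lt hw h; omega, edges_toFinset_eq_arc h⟩
  obtain hlen | ⟨n, hlen⟩ : w.length = 0 ∨ ∃ n, w.length = n + 1 := by
    cases w.length <;> simp
  · have := hc.three_le
    have : w.edges = [] := List.eq_nil_of_length_eq_zero (w.length_edges.trans hlen)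
    exact ⟨0, 0, le_rfl, by omega, by simp [this, arc]⟩
  obtain ⟨p, h | h⟩ := hc.exists_follows (n := n) (hlen ▸ hw.getVert_injOn) fun i hi =>
    hPC (List.mem_toFinset.2 (w.mk_mem_edges_iff_exists.2 ⟨i, by omega, rfl⟩))
  · exact arc_of_forward hw (hlen ▸ h)
  · simpa using arc_of_forward hw.reverse fun i hi => by
      rw [w.length_reverse] at hi
      rw [w.getVert_reverse]
      exact h _ _ (by omega)

/-! ### Skips from pairs of chords -/

theorem exists_walk_along {V : Type*} {G : SimpleGraph V} {c : ℕ → V}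
    (hc : ∀ k, G.Adj (c k) (c (k + 1))) {a b : ℕ} (hab : a ≤ b) :
    ∃ w : G.Walk (c a) (c b), w.support = (List.Ico a (b + 1)).map c ∧
      w.edges = (List.Ico a b).map (edgeAt c) := by
  induction b, hab using Nat.le_induction with
  | base => exact ⟨.nil, by simp, by simp⟩
  | succ b hab ih =>
    obtain ⟨w, hsupport, hedges⟩ := ih
    refine ⟨w.concat (hc b), ?_, ?_⟩
    · simp [SimpleGraph.Walk.support_concat, hsupport, List.Ico.succ_top (Nat.le_succ_of_le hab)]
    · simp [SimpleGraph.Walk.edges_concat, hedges, List.Ico.succ_top hab, edgeAt]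

theorem toFinset_map_edgeAt_Ico {V : Type*} [DecidableEq V] (c : ℕ → V) (a b : ℕ) :
    ((List.Ico a b).map (edgeAt c)).toFinset = arc c a b := by
  ext e
  simp [mem_arc, and_assoc]

/-- A nonempty alternating list of edges that begins and ends with a matching edge. Two such
lists can be joined by non-matching edges into an alternating cycle. -/
structure IsMatchedList {V : Type*} [DecidableEq V] (M : Finset (Sym2 V))
    (l : List (Sym2 V)) : Prop where
  ne_nil : l ≠ []
  alternating : altList M l
  head_mem : ∀ e ∈ l.head?, e ∈ M
  last_mem : ∀ e ∈ l.getLast?, e ∈ M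

namespace IsMatchedList

variable {V : Type*} [DecidableEq V] {M : Finset (Sym2 V)} {l l₁ l₂ : List (Sym2 V)}

theorem reverse (hl : IsMatchedList M l) : IsMatchedList M l.reverse where
  ne_nil := by simpa using hl.ne_nil
  alternating := List.isChain_reverse.2 (hl.alternating.imp fun _ _ h h' => h h'.symm)
  head_mem := by simpa using hl.last_mem
  last_mem := by simpa using hl.head_mem

theorem altList_cyclic (h₁ : IsMatchedList M l₁) (h₂ : IsMatchedList M l₂) {e₁ e₂ : Sym2 V}
    (he₁ : e₁ ∉ M) (he₂ : e₂ ∉ M) :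
    altList M (l₁ ++ e₁ :: (l₂ ++ [e₂]) ++ (l₁ ++ e₁ :: (l₂ ++ [e₂])).take 1) := by
  obtain _ | ⟨m, l⟩ := l₁
  · exact absurd rfl h₁.ne_nil
  have hm : m ∈ M := h₁.head_mem m rfl
  have hturn {a b : Sym2 V} (ha : a ∈ M) (hb : b ∉ M) : ¬(a ∈ M ↔ b ∈ M) := by tauto
  have hturn' {a b : Sym2 V} (ha : a ∉ M) (hb : b ∈ M) : ¬(a ∈ M ↔ b ∈ M) := by tauto
  have htail : altList M (l₂ ++ [e₂, m]) := List.isChain_append.2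
    ⟨h₂.alternating, by simp [hturn' he₂ hm], fun a ha b hb => by
      obtain rfl : e₂ = b := by simpa using hb
      exact hturn (h₂.last_mem a ha) he₂⟩
  have : altList M ((m :: l) ++ e₁ :: (l₂ ++ [e₂, m])) := List.isChain_append.2
    ⟨h₁.alternating, List.isChain_cons.2 ⟨fun a ha => ?_, htail⟩, fun a ha b hb => ?_⟩
  · simpa using this
  · rw [List.head?_append_of_ne_nil _ h₂.ne_nil] at ha
    exact hturn' he₁ (h₂.head_mem a ha)
  · obtain rfl : e₁ = b := by simpa using hb
    exact hturn (h₁.last_mem a ha) he₁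

end IsMatchedList

theorem isAltCycle_of_matched_paths {V : Type*} [DecidableEq V] {G : SimpleGraph V}
    {M : Finset (Sym2 V)} {x y z u : V} {w₁ : G.Walk x y} {w₂ : G.Walk z u}
    (hw₁ : w₁.IsPath) (hw₂ : w₂.IsPath) (hdisj : w₁.support.Disjoint w₂.support)
    (hm₁ : IsMatchedList M w₁.edges) (hm₂ : IsMatchedList M w₂.edges)
    (hyz : G.Adj y z) (hux : G.Adj u x) (hyzM : s(y, z) ∉ M) (huxM : s(u, x) ∉ M) :
    IsAltCycle G M
      (insert s(y, z) (insert s(u, x) (w₁.edges.toFinset ∪ w₂.edges.toFinset))) := by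
  have hlen : 0 < w₁.length := by
    rw [← w₁.length_edges]
    exact List.length_pos_iff.2 hm₁.ne_nil
  have hz : z ∉ w₁.support := fun h => hdisj h w₂.start_mem_support
  have hx : x ∉ w₂.support := hdisj w₁.start_mem_support
  have start_notMem {a b : V} {w : G.Walk a b} (hw : w.IsPath) : a ∉ w.support.tail :=
    (List.nodup_cons.1 (w.cons_tail_support ▸ hw.support_nodup)).1
  refine ⟨x, (w₁.concat hyz).append (w₂.concat hux),
    (hw₁.concat hz hyz).isCycle_append (hw₂.concat hx hux) ?_ (.inl (by simpa)), ?_, ?_⟩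
  · rw [SimpleGraph.Walk.support_concat, SimpleGraph.Walk.support_concat,
      List.tail_append_of_ne_nil w₁.support_ne_nil, List.tail_append_of_ne_nil w₂.support_ne_nil]
    simp only [List.disjoint_append_left, List.disjoint_append_right, List.disjoint_singleton,
      List.singleton_disjoint, List.mem_append, List.mem_singleton, not_or]
    exact ⟨⟨fun v h₁ h₂ => hdisj (List.mem_of_mem_tail h₁) (List.mem_of_mem_tail h₂),
      start_notMem hw₂⟩, start_notMem hw₁, fun h => hz (h ▸ w₁.start_mem_support)⟩
  · ext e
    simp
  · simpa [SimpleGraph.Walk.edges_append, SimpleGraph.Walk.edges_concat] using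
      hm₁.altList_cyclic hm₂ hyzM huxM

/-- The cycle obtained from the parametrized cycle `c` of length `L` by replacing its stretches
`[i, j]` and `[k, l]` with the chords `c i c k` and `c j c l`. -/
def shortcut {V : Type*} [DecidableEq V] (c : ℕ → V) (L i j k l : ℕ) : Finset (Sym2 V) :=
  insert s(c i, c k) (insert s(c j, c l) (arc c l (i + L) ∪ arc c j k))

namespace IsAltParam

variable {V : Type*} {G : SimpleGraph V} {M C : Finset (Sym2 V)} {L : ℕ} {c : ℕ → V}
  (hc : IsAltParam G M C L c) {a b i j k l : ℕ}
include hc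

theorem chord_notMem (hij : Even (i + j)) : s(c i, c j) ∉ C := by
  intro h
  obtain ⟨m, hm⟩ := hc.mem_iff.1 h
  have hparity : Even i ↔ ¬ Even j := by
    obtain ⟨hi, hj⟩ | ⟨hj, hi⟩ := Sym2.eq_iff.1 hm
    · rw [← hc.even_iff_of_apply_eq hi, ← hc.even_iff_of_apply_eq hj, Nat.even_add_one, not_not]
    · rw [← hc.even_iff_of_apply_eq hi, ← hc.even_iff_of_apply_eq hj, Nat.even_add_one]
  rw [Nat.even_add] at hij
  tauto

theorem notMem_of_notMem (hM : IsMatchingSet M) {e : Sym2 V} (he : c i ∈ e) (heC : e ∉ C) :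
    e ∉ M := by
  obtain ⟨m, hm, hcm⟩ : ∃ m, Even m ∧ c i ∈ edgeAt c m := by
    obtain hi | ⟨n, rfl⟩ := i.even_or_odd
    · exact ⟨i, hi, Sym2.mem_mk_left _ _⟩
    · exact ⟨2 * n, even_two_mul n, Sym2.mem_mk_right _ _⟩
  exact fun heM => heC (hM heM (hc.edgeAt_mem_iff.2 hm) he hcm ▸ hc.edgeAt_mem m)

theorem chords_ne (hij : i < j) (hjk : j < k) (hkl : k < l) (hli : l < i + L) :
    s(c i, c k) ≠ s(c j, c l) := by
  intro h
  obtain ⟨h, -⟩ | ⟨h, -⟩ := Sym2.eq_iff.1 h <;>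
    have := hc.eq_of_apply_eq h (by omega) (by omega) <;> omega

theorem exists_path_along (hab : a ≤ b) (hb : b < a + L) :
    ∃ w : G.Walk (c a) (c b), w.IsPath ∧ w.support = (List.Ico a (b + 1)).map c ∧
      w.edges = (List.Ico a b).map (edgeAt c) := by
  obtain ⟨w, hsupport, hedges⟩ := exists_walk_along hc.adj hab
  refine ⟨w, ?_, hsupport, hedges⟩
  rw [w.isPath_def, hsupport]
  exact (List.Ico.nodup _ _).map_on fun x hx y hy =>
    hc.injOn (Nat.succ_le_of_lt hb) (by simpa using hx) (by simpa using hy)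

variable [DecidableEq V]

theorem altList_map_edgeAt (a b : ℕ) : altList M ((List.Ico a b).map (edgeAt c)) :=
  (List.isChain_map _).2 <| (List.Ico.isChain_succ a b).imp fun m n h => by
    rw [h, hc.edgeAt_mem_iff, hc.edgeAt_mem_iff, Nat.succ_eq_add_one, Nat.even_add_one]
    tauto

theorem isAltPath_arc (hab : a ≤ b) (hb : b < a + L) : IsAltPath G M (arc c a b) := by
  obtain ⟨w, hw, -, hedges⟩ := hc.exists_path_along hab hb
  exact ⟨_, _, w, hw, hedges ▸ toFinset_map_edgeAt_Ico c a b, hedges ▸ hc.altList_map_edgeAt a b⟩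

theorem isMatchedList_map_edgeAt (hab : a < b) (ha : Even a) (hb : Odd b) :
    IsMatchedList M ((List.Ico a b).map (edgeAt c)) where
  ne_nil := by simpa using hab
  alternating := hc.altList_map_edgeAt a b
  head_mem := by simp [List.Ico.eq_cons hab, hc.edgeAt_mem_iff, ha]
  last_mem := by
    obtain ⟨m, rfl⟩ := hb
    simp [List.Ico.succ_top (Nat.le_of_lt_succ hab), hc.edgeAt_mem_iff]

theorem card_shortcut_lt (hjk : j < k) (hli : l < i + L) (h : i + k + 2 < j + l) :
    (shortcut c L i j k l).card < C.card := by
  have h₁ := hc.card_arc (a := l) (b := i + L) (by omega)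
  have h₂ := hc.card_arc (a := j) (b := k) (by omega)
  have : (shortcut c L i j k l).card ≤ (arc c l (i + L)).card + (arc c j k).card + 1 + 1 :=
    (card_insert_le _ _).trans <| Nat.succ_le_succ <|
      (card_insert_le _ _).trans <| Nat.succ_le_succ <| card_union_le _ _
  rw [hc.card_eq]
  omega

theorem sdiff_shortcut_subset : C \ shortcut c L i j k l ⊆ arc c i l := by
  intro e he
  obtain ⟨heC, he⟩ := mem_sdiff.1 he
  obtain ⟨m, him, hm, rfl⟩ := mem_arc.1 (hc.arc_length i ▸ heC)
  refine mem_arc.2 ⟨m, him, ?_, rfl⟩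
  by_contra! hlm
  exact he (mem_insert_of_mem (mem_insert_of_mem (mem_union_left _ (mem_arc.2 ⟨m, hlm, hm, rfl⟩))))

section Shortcut

variable (hij : i < j) (hjk : j < k) (hkl : k < l) (hli : l < i + L)
include hij hjk hkl hli

theorem isAltCycle_shortcut (hM : IsMatchingSet M) (hi : Odd i) (hj : Even j) (hk : Odd k)
    (hl : Even l) (hik : G.Adj (c i) (c k)) (hjl : G.Adj (c j) (c l)) :
    IsAltCycle G M (shortcut c L i j k l) := by
  obtain ⟨w₁, hw₁, hsupport₁, hedges₁⟩ := hc.exists_path_along hli.le (by omega)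
  obtain ⟨w₂, hw₂, hsupport₂, hedges₂⟩ := hc.exists_path_along hjk.le (by omega)
  have hclose := hc.apply_add_length i
  have hdisj : w₁.support.Disjoint w₂.reverse.support := by
    simp only [SimpleGraph.Walk.support_reverse, hsupport₁, hsupport₂, List.disjoint_left,
      List.mem_reverse, List.mem_map, List.Ico.mem]
    rintro _ ⟨m, hm, rfl⟩ ⟨n, hn, h⟩
    have := hc.eq_of_apply_eq h (by omega) (by omega)
    omega
  have hikC := hc.chord_notMem (hi.add_odd hk)
  have hjlC := hc.chord_notMem (hj.add hl)
  have := isAltCycle_of_matched_paths hw₁ hw₂.reverse hdisj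
    (hedges₁ ▸ hc.isMatchedList_map_edgeAt hli hl (hi.add_even hc.even_length))
    (w₂.edges_reverse ▸ (hedges₂ ▸ hc.isMatchedList_map_edgeAt hjk hj hk).reverse)
    (hclose ▸ hik) hjl (hclose ▸ hc.notMem_of_notMem hM (Sym2.mem_mk_left _ _) hikC)
    (hc.notMem_of_notMem hM (Sym2.mem_mk_left _ _) hjlC)
  rw [w₂.edges_reverse, List.toFinset_reverse, hedges₁, hedges₂, toFinset_map_edgeAt_Ico,
    toFinset_map_edgeAt_Ico, hclose] at this
  exact this

theorem wSum_shortcut_sub (red : Sym2 V → Bool) (hikC : s(c i, c k) ∉ C)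
    (hjlC : s(c j, c l) ∉ C) :
    wSum red M (shortcut c L i j k l) - wSum red M C =
      wt red M s(c i, c k) + wt red M s(c j, c l) -
        (potential red M c j - potential red M c i +
          (potential red M c l - potential red M c k)) := by
  have hsub : arc c l (i + L) ∪ arc c j k ⊆ C :=
    union_subset (hc.arc_subset _ _) (hc.arc_subset _ _)
  have hdisj : Disjoint (arc c l (i + L)) (arc c j k) :=
    (hc.disjoint_arc (by omega) (by omega)).symm
  have hC := hc.wSum_arc red (a := i) (b := i + L) (by omega) le_rfl
  have h₁ := hc.wSum_arc red (a := l) (b := i + L) (by omega) (by omega)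
  have h₂ := hc.wSum_arc red (a := j) (b := k) (by omega) (by omega)
  rw [hc.arc_length] at hC
  rw [hC, shortcut, wSum, sum_insert, sum_insert (fun h => hjlC (hsub h)), sum_union hdisj,
    ← wSum, ← wSum, h₁, h₂]
  · ring
  · rw [mem_insert, not_or]
    exact ⟨hc.chords_ne hij hjk hkl hli, fun h => hikC (hsub h)⟩

theorem exists_skip (red : Sym2 V → Bool) (hM : IsMatchingSet M) (hi : Odd i) (hj : Even j)
    (hk : Odd k) (hl : Even l) (hik : G.Adj (c i) (c k)) (hjl : G.Adj (c j) (c l))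
    (hlen : i + k + 2 < j + l) {d : ℤ} (hd : d ∈ Set.Icc (-2) 4)
    (hgain : potential red M c j - potential red M c i +
      (potential red M c l - potential red M c k) = d) :
    ∃ S : Skip G red M C, S.w ∈ Set.Icc (-d) (2 - d) ∧ S.In (arc c i l) := by
  have hikC := hc.chord_notMem (hi.add_odd hk)
  have hjlC := hc.chord_notMem (hj.add hl)
  have hikM := hc.notMem_of_notMem hM (Sym2.mem_mk_left _ _) hikC
  have hjlM := hc.notMem_of_notMem hM (Sym2.mem_mk_left _ _) hjlC
  have hik_wt := wt_mem_Icc_of_notMem red hikM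
  have hjl_wt := wt_mem_Icc_of_notMem red hjlM
  have hw : wSum red M (shortcut c L i j k l) - wSum red M C ∈ Set.Icc (-d) (2 - d) := by
    rw [hc.wSum_shortcut_sub hij hjk hkl hli red hikC hjlC, hgain]
    exact ⟨by linarith [hik_wt.1, hjl_wt.1], by linarith [hik_wt.2, hjl_wt.2]⟩
  have hsub : shortcut c L i j k l \ {s(c i, c k), s(c j, c l)} ⊆ C := by
    rintro e he
    simp only [shortcut, mem_sdiff, mem_insert, mem_singleton, mem_union] at he
    have := hc.arc_subset l (i + L) (x := e)
    have := hc.arc_subset j k (x := e)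
    tauto
  exact ⟨{
    e1 := s(c i, c k)
    e2 := s(c j, c l)
    C' := shortcut c L i j k l
    hne := hc.chords_ne hij hjk hkl hli
    he1G := hik
    he2G := hjl
    he1M := hikM
    he2M := hjlM
    he1C := hikC
    he2C := hjlC
    halt := hc.isAltCycle_shortcut hij hjk hkl hli hM hi hj hk hl hik hjl
    hmem1 := mem_insert_self _ _
    hmem2 := mem_insert_of_mem (mem_insert_self _ _)
    hsub := hsub
    hsmall := hc.card_shortcut_lt hjk hli hlen
    hwbound := abs_le.2 ⟨by linarith [hw.1, hd.2], by linarith [hw.2, hd.1]⟩ }, hw,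
    hc.sdiff_shortcut_subset⟩

end Shortcut

end IsAltParam

theorem arc_subset_arc {V : Type*} [DecidableEq V] (c : ℕ → V) {a b a' b' : ℕ} (ha : a' ≤ a)
    (hb : b ≤ b') : arc c a b ⊆ arc c a' b' :=
  image_subset_image (Ico_subset_Ico ha hb)

theorem Skip.Disj.symm {V : Type*} [DecidableEq V] {G : SimpleGraph V} {red : Sym2 V → Bool}
    {M C : Finset (Sym2 V)} {S₁ S₂ : Skip G red M C} (h : S₁.Disj S₂) : S₂.Disj S₁ :=
  let ⟨P₁, P₂, h₁, h₂, hdisj, hP₁, hP₂, hS₁, hS₂⟩ := h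
  ⟨P₂, P₁, h₂, h₁, hdisj.symm, hP₂, hP₁, hS₂, hS₁⟩

namespace IsOddEvenSegments

variable {F : ℕ → ℤ} {p r N : ℕ} {d : ℤ} {x y : Fin N → ℕ} (h : IsOddEvenSegments F p r d x y)
include h

theorem comp {n : ℕ} {f : Fin n → Fin N} (hf : StrictMono f) :
    IsOddEvenSegments F p r d (x ∘ f) (y ∘ f) where
  odd_left _ := h.odd_left _
  even_right _ := h.even_right _
  le_left _ := h.le_left _
  left_lt_right _ := h.left_lt_right _
  right_le _ := h.right_le _
  gain _ := h.gain _
  right_lt_left _ _ hlt := h.right_lt_left (hf hlt)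

theorem strictMono_left : StrictMono x := fun m _ hlt =>
  (h.left_lt_right m).trans (h.right_lt_left hlt)

theorem strictMono_right : StrictMono y := fun _ m' hlt =>
  (h.right_lt_left hlt).trans (h.left_lt_right m')

theorem left_add_three_le (hodd : ∀ k, Odd k → F (k + 1) - F k ∈ Set.Icc 0 1)
    (hd : d ∉ Set.Icc 0 1) (m : Fin N) : x m + 3 ≤ y m := by
  obtain ⟨a, ha⟩ := h.odd_left m
  obtain ⟨b, hb⟩ := h.even_right m
  have := h.left_lt_right m
  have : y m ≠ x m + 1 := fun heq => hd (h.gain m ▸ heq ▸ hodd _ (h.odd_left m))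
  omega

end IsOddEvenSegments

namespace IsAltParam

variable {V : Type*} [DecidableEq V] {G : SimpleGraph V} {red : Sym2 V → Bool}
  {M C : Finset (Sym2 V)} {L : ℕ} {c : ℕ → V} (hc : IsAltParam G M C L c)
  (hM : IsMatchingSet M) {α : ℕ} (hα : G.IndepSetFree (α + 1)) {p r : ℕ} (hr : r < p + L)
  {d : ℤ} (hd : d = 2 ∨ d = -1)
include hc hM hα hr hd

theorem exists_skip_of_segments {x y : Fin α.centralBinom → ℕ}
    (h : IsOddEvenSegments (potential red M c) p r d x y) :
    ∃ S : Skip G red M C, S.w ∈ Set.Icc (-(2 * d)) (2 - 2 * d) ∧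
      ∃ m m', m < m' ∧ S.In (arc c (x m) (y m')) := by
  have injective {f : Fin α.centralBinom → ℕ} (hf : StrictMono f) (hpf : ∀ m, p ≤ f m)
      (hfr : ∀ m, f m ≤ r) : Function.Injective (c ∘ f) := fun m m' heq => hf.injective <|
    hc.eq_of_apply_eq heq (by linarith [hfr m, hpf m']) (by linarith [hfr m', hpf m])
  have hx := injective h.strictMono_left h.le_left
    fun m => (h.left_lt_right m).le.trans (h.right_le m)
  have hy := injective h.strictMono_right
    (fun m => (h.le_left m).trans (h.left_lt_right m).le) h.right_le
  obtain ⟨m, m', hlt, hadj_x, hadj_y⟩ := exists_common_adj hα hx hy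
  have hlong := h.left_add_three_le (fun k => hc.potential_step_of_odd red (k := k))
    (by rintro ⟨h0, h1⟩; omega)
  have := hlong m
  have := hlong m'
  have := h.le_left m
  have := h.right_le m'
  obtain ⟨S, hw, hS⟩ := hc.exists_skip (h.left_lt_right m) (h.right_lt_left hlt)
    (h.left_lt_right m') (by omega) red hM (h.odd_left m) (h.even_right m) (h.odd_left m')
    (h.even_right m') hadj_x hadj_y (by omega) (d := 2 * d) ⟨by omega, by omega⟩
    (by rw [h.gain, h.gain, two_mul])
  exact ⟨S, hw, m, m', hlt, hS⟩

theorem exists_disjoint_skips {t : ℕ} {x y : Fin (t * α.centralBinom) → ℕ}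
    (h : IsOddEvenSegments (potential red M c) p r d x y) :
    ∃ S : Fin t → Skip G red M C,
      (∀ i, (S i).w ∈ Set.Icc (-(2 * d)) (2 - 2 * d) ∧ (S i).In (arc c p r)) ∧
        ∀ i j, i ≠ j → (S i).Disj (S j) := by
  have block_lt {g g' : Fin t} (hlt : g < g') (s s' : Fin α.centralBinom) :
      finProdFinEquiv (g, s) < finProdFinEquiv (g', s') := by
    rw [Fin.lt_def, finProdFinEquiv_apply_val, finProdFinEquiv_apply_val]
    have : α.centralBinom * (g + 1) ≤ α.centralBinom * g' := Nat.mul_le_mul_left _ hlt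
    dsimp only
    linarith [s.isLt]
  have block_mono (g : Fin t) : StrictMono fun s : Fin α.centralBinom => finProdFinEquiv (g, s) :=
    fun s s' hlt => by
      rw [Fin.lt_def, finProdFinEquiv_apply_val, finProdFinEquiv_apply_val]
      exact Nat.add_lt_add_right hlt _
  choose S hw s s' hs hS using fun g => hc.exists_skip_of_segments hM hα hr hd
    (h.comp (block_mono g))
  have hlt (g : Fin t) : x (finProdFinEquiv (g, s g)) < y (finProdFinEquiv (g, s' g)) :=
    (h.left_lt_right _).trans (h.strictMono_right (block_mono g (hs g)))
  have hdisj {g g' : Fin t} (hgg' : g < g') : (S g).Disj (S g') := by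
    have hx := h.le_left (finProdFinEquiv (g, s g))
    have hx' := h.le_left (finProdFinEquiv (g', s g'))
    have hy := h.right_le (finProdFinEquiv (g, s' g))
    have hy' := h.right_le (finProdFinEquiv (g', s' g'))
    have hsep := h.right_lt_left (block_lt hgg' (s' g) (s g'))
    exact ⟨_, _, hc.arc_subset _ _, hc.arc_subset _ _, hc.disjoint_arc hsep.le (by omega),
      hc.isAltPath_arc (hlt g).le (by omega), hc.isAltPath_arc (hlt g').le (by omega), hS g, hS g'⟩
  refine ⟨S, fun g => ⟨hw g, (hS g).trans (arc_subset_arc c (h.le_left _) (h.right_le _))⟩,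
    fun g g' hne => ?_⟩
  obtain hgg' | hgg' := lt_or_gt_of_ne hne
  · exact hdisj hgg'
  · exact (hdisj hgg').symm

end IsAltParam

theorem big_weight_path_has_skips_general {V : Type*} [DecidableEq V] (G : SimpleGraph V)
    (red : Sym2 V → Bool) {α : ℕ} (hα : G.IndepSetFree (α + 1)) (t : ℕ) {M : Finset (Sym2 V)}
    (hM : IsMatchingSet M) {C : Finset (Sym2 V)} (hC : IsAltCycle G M C)
    {P : Finset (Sym2 V)} (hPC : P ⊆ C) (hP : IsAltPath G M P) :
    ((2 * (t * α.centralBinom) : ℤ) ≤ wSum red M P →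
      ∃ S : Fin t → Skip G red M C,
        (∀ i, (S i).w < 0 ∧ (S i).In P) ∧ ∀ i j, i ≠ j → Skip.Disj (S i) (S j)) ∧
    (wSum red M P < -(2 * (t * α.centralBinom) : ℤ) →
      ∃ S : Fin t → Skip G red M C,
        (∀ i, 0 < (S i).w ∧ (S i).In P) ∧ ∀ i j, i ≠ j → Skip.Disj (S i) (S j)) := by
  obtain ⟨L, c, hc⟩ := hC.exists_isAltParam
  obtain ⟨p, r, hpr, hr, rfl⟩ := hc.exists_arc_eq hP hPC
  have hodd (k : ℕ) := hc.potential_step_of_odd red (k := k)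
  have heven (k : ℕ) := hc.potential_step_of_even red (k := k)
  rw [hc.wSum_arc red hpr hr.le]
  refine ⟨fun hw => ?_, fun hw => ?_⟩
  · obtain ⟨x, y, h⟩ := exists_isOddEvenSegments_two hodd heven hpr
      (N := t * α.centralBinom) (by push_cast; linarith)
    obtain ⟨S, hS, hdisj⟩ := hc.exists_disjoint_skips hM hα hr (.inl rfl) h
    exact ⟨S, fun i => ⟨by linarith [(hS i).1.2], (hS i).2⟩, hdisj⟩
  · obtain ⟨x, y, h⟩ := exists_isOddEvenSegments_neg_one hodd heven hpr
      (N := t * α.centralBinom) (by push_cast; linarith)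
    obtain ⟨S, hS, hdisj⟩ := hc.exists_disjoint_skips hM hα hr (.inr rfl) h
    exact ⟨S, fun i => ⟨by linarith [(hS i).1.1], (hS i).2⟩, hdisj⟩

theorem indepNum_eq_indepNum {V : Type*} (G : SimpleGraph V) : indepNum G = G.indepNum := by
  simp only [indepNum, SimpleGraph.indepNum, SimpleGraph.isNIndepSet_iff,
    SimpleGraph.isIndepSet_iff, and_comm]

theorem indepSetFree_indepNum_add_one {V : Type*} [Finite V] (G : SimpleGraph V) :
    G.IndepSetFree (indepNum G + 1) := fun T hT => by
  have := hT.isIndepSet.card_le_indepNum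
  rw [hT.card_eq, ← indepNum_eq_indepNum] at this
  omega

theorem indepNum_pos {V : Type*} [Finite V] [Nonempty V] (G : SimpleGraph V) :
    0 < indepNum G := by
  obtain ⟨v⟩ := ‹Nonempty V›
  rw [indepNum_eq_indepNum]
  exact (card_singleton v).symm.le.trans
    (SimpleGraph.IsIndepSet.card_le_indepNum (by simp [SimpleGraph.isIndepSet_iff]))

theorem two_mul_mul_centralBinom_lt {α t : ℕ} (hα : 0 < α) (ht : 1 ≤ t) :
    (2 * (t * α.centralBinom) : ℤ) < 2 * t * 4 ^ α := by
  have := Nat.centralBinom_lt_four_pow hα.ne'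
  have : t * α.centralBinom < t * 4 ^ α := by gcongr
  rw [mul_assoc]
  exact_mod_cast Nat.mul_lt_mul_of_pos_left this two_pos

/-- Big-weight paths contain many disjoint skips: if `P ⊆ C` is an `M`-alternating path on
an `M`-alternating cycle `C` with `w_M(P) ≥ 2t·4^α`, then `P` contains at least `t`
pairwise disjoint negative skips; symmetrically, if `w_M(P) ≤ −2t·4^α` then `P` contains
at least `t` pairwise disjoint positive skips. -/
theorem big_weight_path_has_skips
    {V : Type*} [Fintype V] [DecidableEq V] (G : SimpleGraph V) (red : Sym2 V → Bool)
    (t : ℕ) (ht : 1 ≤ t) (M : Finset (Sym2 V)) (hM : IsPM G M)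
    (C : Finset (Sym2 V)) (hC : IsAltCycle G M C)
    (P : Finset (Sym2 V)) (hPC : P ⊆ C) (hP : IsAltPath G M P) :
    ((2 * t * 4 ^ indepNum G : ℤ) ≤ wSum red M P →
      ∃ S : Fin t → Skip G red M C,
        (∀ i, (S i).w < 0 ∧ (S i).In P) ∧
        ∀ i j, i ≠ j → Skip.Disj (S i) (S j)) ∧
    (wSum red M P ≤ -(2 * t * 4 ^ indepNum G : ℤ) →
      ∃ S : Fin t → Skip G red M C,
        (∀ i, 0 < (S i).w ∧ (S i).In P) ∧
        ∀ i j, i ≠ j → Skip.Disj (S i) (S j)) := by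
  have : Nonempty V := ⟨hC.choose⟩
  have hbound := two_mul_mul_centralBinom_lt (indepNum_pos G) ht
  have general := big_weight_path_has_skips_general G red (indepSetFree_indepNum_add_one G) t
    hM.isMatchingSet hC hPC hP
  exact ⟨fun hw => general.1 (hbound.le.trans hw),
    fun hw => general.2 (hw.trans_lt (neg_lt_neg hbound))⟩
end

section
/- Let t ≥ 3 be an integer, M a perfect matching of G, and 𝒞 a set of vertex-disjoint M-alternating cycles such that |w_M(𝒞)| ≤ t, |w_M(C)| ≤ 2t for every C ∈ 𝒞, and |𝒞| ≥ 10t³. Then 𝒞 contains a 0-skip-cycle set. -/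
open Finset

/-! Let the weights of the cycles in a family, and their total, lie in `[-m, m]`. Remove the cycles
one at a time, never one whose weight has the sign opposite to that of the remaining total: this
total then never leaves `[-m, m]`. If there are more than `2 * m` cycles, it takes some value twice,
and the cycles removed in between have total weight `0`; they form a 0-skip-cycle set without
skips. -/

section OrderedGroup

variable {ι A : Type*} [AddCommGroup A] [LinearOrder A] [IsOrderedAddMonoid A]
  {s : Finset ι} {f : ι → A} {m : A}

theorem exists_abs_sum_erase_le [DecidableEq ι] (hs : s.Nonempty) (hf : ∀ i ∈ s, |f i| ≤ m)
    (hsum : |∑ i ∈ s, f i| ≤ m) : ∃ i ∈ s, |∑ j ∈ s.erase i, f j| ≤ m := by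
  rcases le_total 0 (∑ i ∈ s, f i) with htotal | htotal
  · obtain ⟨i, hi, hfi⟩ : ∃ i ∈ s, 0 ≤ f i := exists_le_of_sum_le hs (by simpa using htotal)
    refine ⟨i, hi, ?_⟩
    rw [sum_erase_eq_sub hi]
    exact abs_sub_le_of_nonneg_of_le htotal (le_of_abs_le hsum) hfi (le_of_abs_le (hf i hi))
  · obtain ⟨i, hi, hfi⟩ : ∃ i ∈ s, f i ≤ 0 := exists_le_of_sum_le hs (by simpa using htotal)
    refine ⟨i, hi, ?_⟩
    rw [sum_erase_eq_sub hi, ← neg_sub_neg]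
    exact abs_sub_le_of_nonneg_of_le
      (neg_nonneg.2 hfi) (neg_le.1 (neg_le_of_abs_le (hf i hi)))
      (neg_nonneg.2 htotal) (neg_le.1 (neg_le_of_abs_le hsum))

theorem exists_isChain_abs_sum_le (hf : ∀ i ∈ s, |f i| ≤ m) (hsum : |∑ i ∈ s, f i| ≤ m) :
    ∃ 𝒯 : Finset (Finset ι), #𝒯 = #s + 1 ∧ IsChain (· ⊆ ·) (𝒯 : Set (Finset ι)) ∧
      ∀ T ∈ 𝒯, T ⊆ s ∧ |∑ i ∈ T, f i| ≤ m := by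
  classical
  induction s using Finset.strongInduction with
  | H s ih =>
    obtain rfl | hs := s.eq_empty_or_nonempty
    · exact ⟨{∅}, by simp, by simp, by simpa using hsum⟩
    obtain ⟨i, hi, hi_sum⟩ := exists_abs_sum_erase_le hs hf hsum
    obtain ⟨𝒯, hcard, hchain, h𝒯⟩ :=
      ih (s.erase i) (erase_ssubset hi) (fun j hj ↦ hf j (mem_of_mem_erase hj)) hi_sum
    have hsub : ∀ T ∈ 𝒯, T ⊆ s := fun T hT ↦ (h𝒯 T hT).1.trans (erase_subset i s)
    have hs𝒯 : s ∉ 𝒯 := fun h ↦ notMem_erase i s ((h𝒯 s h).1 hi)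
    refine ⟨insert s 𝒯, ?_, ?_, ?_⟩
    · rw [card_insert_of_notMem hs𝒯, hcard, card_erase_add_one hi]
    · rw [coe_insert]
      exact hchain.insert fun T hT _ ↦ Or.inr (hsub T hT)
    · rw [forall_mem_insert]
      exact ⟨⟨Subset.rfl, hsum⟩, fun T hT ↦ ⟨hsub T hT, (h𝒯 T hT).2⟩⟩

end OrderedGroup

theorem exists_nonempty_subset_sum_eq_zero {ι : Type*} {s : Finset ι} {f : ι → ℤ} {m : ℤ}
    (hf : ∀ i ∈ s, |f i| ≤ m) (hsum : |∑ i ∈ s, f i| ≤ m) (hcard : 2 * m < #s) :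
    ∃ T ⊆ s, T.Nonempty ∧ ∑ i ∈ T, f i = 0 := by
  classical
  obtain ⟨𝒯, h𝒯card, hchain, h𝒯⟩ := exists_isChain_abs_sum_le hf hsum
  have hmaps : ∀ T ∈ 𝒯, ∑ i ∈ T, f i ∈ Icc (-m) m := fun T hT ↦ mem_Icc.2 (abs_le.1 (h𝒯 T hT).2)
  have hlt : #(Icc (-m) m) < #𝒯 := by
    rw [Int.card_Icc, h𝒯card]
    omega
  obtain ⟨T, hT, U, hU, hne, heq⟩ := exists_ne_map_eq_of_card_lt_of_maps_to hlt hmaps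
  wlog hTU : T ⊆ U generalizing T U
  · exact this U hU T hT hne.symm heq.symm ((hchain.total hT hU).resolve_left hTU)
  refine ⟨U \ T, sdiff_subset.trans (h𝒯 U hU).1, sdiff_nonempty.2 fun h ↦ hne (hTU.antisymm h), ?_⟩
  rw [sum_sdiff_eq_sub hTU, heq, sub_self]

section SkipCycleSet

variable {V : Type*} [DecidableEq V] {G : SimpleGraph V} {red : Sym2 V → Bool}
  {M : Finset (Sym2 V)} {𝒞 : Finset (Finset (Sym2 V))}

theorem HasZeroSkipCycleSet.of_sum_wSum_eq_zero {D : Finset (Finset (Sym2 V))} (hD : D ⊆ 𝒞)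
    (hne : D.Nonempty) (hsum : ∑ C ∈ D, wSum red M C = 0) : HasZeroSkipCycleSet G red M 𝒞 :=
  ⟨[], D, hD, Or.inr hne, List.Pairwise.nil, by simp, by simp [hsum]⟩

theorem many_cycles_give_zero_skip_cycle_set_general {m : ℤ} (htot : |∑ C ∈ 𝒞, wSum red M C| ≤ m)
    (heach : ∀ C ∈ 𝒞, |wSum red M C| ≤ m) (hmany : 2 * m < #𝒞) :
    HasZeroSkipCycleSet G red M 𝒞 := by
  obtain ⟨D, hD, hne, hsum⟩ := exists_nonempty_subset_sum_eq_zero heach htot hmany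
  exact .of_sum_wSum_eq_zero hD hne hsum

end SkipCycleSet

/-- Not many cycles: let `t ≥ 3` and `𝒞` a set of vertex-disjoint `M`-alternating cycles
with `|w_M(𝒞)| ≤ t`, `|w_M(C)| ≤ 2t` for every `C ∈ 𝒞` and `|𝒞| ≥ 10t³`. Then `𝒞`
contains a 0-skip-cycle set. -/
theorem many_cycles_give_zero_skip_cycle_set
    {V : Type*} [Fintype V] [DecidableEq V] (G : SimpleGraph V) (red : Sym2 V → Bool)
    (t : ℕ) (ht : 3 ≤ t)
    (M : Finset (Sym2 V)) (hM : IsPM G M)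
    (𝒞 : Finset (Finset (Sym2 V))) (h𝒞 : IsAltCycleSet G M 𝒞)
    (htot : |∑ C ∈ 𝒞, wSum red M C| ≤ (t : ℤ))
    (heach : ∀ C ∈ 𝒞, |wSum red M C| ≤ (2 * t : ℤ))
    (hmany : 10 * t ^ 3 ≤ 𝒞.card) :
    HasZeroSkipCycleSet G red M 𝒞 := by
  have hcard : 4 * t < #𝒞 := by linarith [Nat.le_self_pow three_ne_zero t]
  exact many_cycles_give_zero_skip_cycle_set_general (by omega) heach (by omega)
end
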